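/- In A(1), the augmentation ideal I, i.e., the two-sided ideal generated by Sq1 and Sq2, satisfies I⁸ = 0. -/

import Mathlib

/-- The relations defining `A(1)`: `Sq¹·Sq¹ = 0` and `Sq²·Sq² + Sq¹·Sq²·Sq¹ = 0`. -/
inductive A1Rel : FreeAlgebra (ZMod 2) (Fin 2) → FreeAlgebra (ZMod 2) (Fin 2) → Prop
  | sq1 : A1Rel (FreeAlgebra.ι (ZMod 2) 0 * FreeAlgebra.ι (ZMod 2) 0) 0
  | sq2 : A1Rel (FreeAlgebra.ι (ZMod 2) 1 * FreeAlgebra.ι (ZMod 2) 1 +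
      FreeAlgebra.ι (ZMod 2) 0 * FreeAlgebra.ι (ZMod 2) 1 * FreeAlgebra.ι (ZMod 2) 0) 0

/-- `A(1)`, the subalgebra of the mod 2 Steenrod algebra generated by `Sq¹` and `Sq²`, presented
as the quotient of the free `F₂`-algebra on two generators `Sq1, Sq2` by the two-sided ideal
generated by `Sq1·Sq1` and `Sq2·Sq2 + Sq1·Sq2·Sq1`. -/
abbrev A1 : Type := RingQuot A1Rel

/-- The image of `Sq¹` in `A(1)`. -/
noncomputable def Sq1 : A1 := RingQuot.mkAlgHom (ZMod 2) A1Rel (FreeAlgebra.ι (ZMod 2) 0)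

/-- The image of `Sq²` in `A(1)`. -/
noncomputable def Sq2 : A1 := RingQuot.mkAlgHom (ZMod 2) A1Rel (FreeAlgebra.ι (ZMod 2) 1)

/-- Milnor's element `Q₀ = Sq¹·Sq² + Sq²·Sq¹` in `A(1)`. -/
noncomputable def Q0 : A1 := Sq1 * Sq2 + Sq2 * Sq1

/-!
When `Sq1` and `Sq2` generate the algebra, the left ideal they span is already two-sided, so `Iⁿ` is
the left ideal spanned by the words of length `n` in `Sq1` and `Sq2`. The relations, with `a = Sq1`
and `b = Sq2`, kill `aa`, `abb`, `bba` and `bbbb`, so that only the alternating words `abab` and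
`baba` survive in length four. Computing `bbb` in two ways identifies these two; hence `b·abab`
can be rewritten as `b·baba`, which contains `bba`, and every word of length five vanishes.
-/

open scoped Pointwise

section GeneratedIdeal

variable {A : Type*}

theorem isTwoSided_idealSpan_of_adjoin_eq_top {R : Type*} [CommSemiring R] [Semiring A]
    [Algebra R A] {s : Set A} (hs : Algebra.adjoin R s = ⊤) : (Ideal.span s).IsTwoSided where
  mul_mem_of_left {x} y hx := by
    have hy : y ∈ Algebra.adjoin R s := hs ▸ Algebra.mem_top
    induction hy using Algebra.adjoin_induction generalizing x with
    | mem y hy => exact Ideal.mul_mem_left _ x (Ideal.subset_span hy)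
    | algebraMap r =>
      rw [← Algebra.commutes]
      exact Ideal.mul_mem_left _ _ hx
    | add y z _ _ ihy ihz =>
      rw [mul_add]
      exact add_mem (ihy hx) (ihz hx)
    | mul y z _ _ ihy ihz =>
      rw [← mul_assoc]
      exact ihz (ihy hx)

theorem idealSpan_pow [Semiring A] (s : Set A) [(Ideal.span s).IsTwoSided] (n : ℕ) :
    Ideal.span s ^ n = Ideal.span (s ^ n) := by
  induction n with
  | zero =>
    rw [Submodule.pow_zero, pow_zero, ← Set.singleton_one, Ideal.span_singleton_one,
      Ideal.one_eq_top]
  | succ n ih => rw [Ideal.IsTwoSided.pow_succ, pow_succ', ih, Ideal.span_mul_span']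

theorem asIdeal_twoSidedIdealSpan [Ring A] (s : Set A) [(Ideal.span s).IsTwoSided] :
    (TwoSidedIdeal.span s).asIdeal = Ideal.span s := by
  refine le_antisymm ?_ (Ideal.span_le.2 TwoSidedIdeal.subset_span)
  have h : TwoSidedIdeal.span s ≤ (Ideal.span s).toTwoSided :=
    TwoSidedIdeal.span_le.2 fun _ hx ↦ Ideal.mem_toTwoSided.2 (Ideal.subset_span hx)
  simpa only [Ideal.asIdeal_toTwoSided] using TwoSidedIdeal.asIdeal.monotone h

end GeneratedIdeal

/-- The defining relations of `A(1)`, with `a` in the role of `Sq¹` and `b` in that of `Sq²`, for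
elements of an arbitrary ring. The signs are those of the presentation, which matters away from
characteristic two. -/
structure A1Relations {A : Type*} [Ring A] (a b : A) : Prop where
  left_mul_self : a * a = 0
  right_mul_self_add : b * b + a * b * a = 0

namespace A1Relations

variable {A : Type*} [Ring A] {a b : A}

theorem right_mul_self (h : A1Relations a b) : b * b = -(a * (b * a)) := by
  rw [← mul_assoc]
  exact eq_neg_of_add_eq_zero_left h.right_mul_self_add

theorem left_mul_left_mul_eq_zero (h : A1Relations a b) (x : A) : a * (a * x) = 0 := by
  rw [← mul_assoc, h.left_mul_self, zero_mul]

theorem left_mul_right_mul_right_eq_zero (h : A1Relations a b) : a * (b * b) = 0 := by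
  rw [h.right_mul_self, mul_neg, h.left_mul_left_mul_eq_zero, neg_zero]

theorem left_mul_right_mul_right_mul_eq_zero (h : A1Relations a b) (x : A) :
    a * (b * (b * x)) = 0 := by
  simpa only [mul_assoc, zero_mul] using congrArg (· * x) h.left_mul_right_mul_right_eq_zero

theorem right_mul_right_mul_left_eq_zero (h : A1Relations a b) : b * (b * a) = 0 := by
  simp only [← mul_assoc, h.right_mul_self, neg_mul]
  simp only [mul_assoc, h.left_mul_self, mul_zero, neg_zero]

theorem right_mul_right_mul_left_mul_eq_zero (h : A1Relations a b) (x : A) :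
    b * (b * (a * x)) = 0 := by
  simpa only [mul_assoc, zero_mul] using congrArg (· * x) h.right_mul_right_mul_left_eq_zero

theorem right_pow_four_eq_zero (h : A1Relations a b) : b * (b * (b * b)) = 0 := by
  rw [h.right_mul_self, mul_neg, mul_neg, h.right_mul_right_mul_left_mul_eq_zero, neg_zero]

theorem right_left_right_left_eq (h : A1Relations a b) : b * (a * (b * a)) = a * (b * (a * b)) :=
  neg_injective <| calc
    -(b * (a * (b * a))) = b * (b * b) := by rw [h.right_mul_self, mul_neg]
    _ = b * b * b := (mul_assoc b b b).symm
    _ = -(a * (b * (a * b))) := by rw [h.right_mul_self, neg_mul]; simp only [mul_assoc]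

theorem pair_pow_two_subset (h : A1Relations a b) :
    ({a, b} : Set A) ^ 2 ⊆ {0, a * b, b * a, b * b} := by
  simp [pow_two, Set.mul_subset_iff, h.left_mul_self]

theorem pair_pow_three_subset (h : A1Relations a b) :
    ({a, b} : Set A) ^ 3 ⊆ {0, a * (b * a), b * (a * b), b * (b * b)} := by
  rw [pow_succ']
  refine (Set.mul_subset_mul_left h.pair_pow_two_subset).trans ?_
  simp [Set.mul_subset_iff, h.left_mul_left_mul_eq_zero, h.left_mul_right_mul_right_eq_zero,
    h.right_mul_right_mul_left_eq_zero]

theorem pair_pow_four_subset (h : A1Relations a b) :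
    ({a, b} : Set A) ^ 4 ⊆ {0, a * (b * (a * b))} := by
  rw [pow_succ']
  refine (Set.mul_subset_mul_left h.pair_pow_three_subset).trans ?_
  simp [Set.mul_subset_iff, h.left_mul_left_mul_eq_zero, h.left_mul_right_mul_right_mul_eq_zero,
    h.right_left_right_left_eq, h.right_mul_right_mul_left_mul_eq_zero, h.right_pow_four_eq_zero]

theorem pair_pow_five_subset (h : A1Relations a b) : ({a, b} : Set A) ^ 5 ⊆ {0} := by
  have h_babab : b * (a * (b * (a * b))) = 0 := by
    rw [← h.right_left_right_left_eq, h.right_mul_right_mul_left_mul_eq_zero]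
  rw [pow_succ']
  refine (Set.mul_subset_mul_left h.pair_pow_four_subset).trans ?_
  simp [-Set.subset_singleton_iff, Set.mul_subset_iff, h.left_mul_left_mul_eq_zero, h_babab]

end A1Relations

theorem a1Relations_Sq1_Sq2 : A1Relations Sq1 Sq2 where
  left_mul_self := by
    simpa only [map_mul, map_zero] using! RingQuot.mkAlgHom_rel (ZMod 2) A1Rel.sq1
  right_mul_self_add := by
    simpa only [map_add, map_mul, map_zero] using! RingQuot.mkAlgHom_rel (ZMod 2) A1Rel.sq2

theorem adjoin_Sq1_Sq2 : Algebra.adjoin (ZMod 2) {Sq1, Sq2} = ⊤ := by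
  have hrange : Set.range (RingQuot.mkAlgHom (ZMod 2) A1Rel ∘ FreeAlgebra.ι (ZMod 2)) =
      {Sq1, Sq2} := by
    ext x
    simp [Fin.exists_fin_two, Sq1, Sq2, eq_comm]
  rw [← hrange, Set.range_comp, ← AlgHom.map_adjoin, FreeAlgebra.adjoin_range_ι,
    Algebra.map_top, AlgHom.range_eq_top]
  exact RingQuot.mkAlgHom_surjective (ZMod 2) A1Rel

theorem A1_augmentationIdeal_pow_eight_general {R A : Type*} [CommSemiring R] [Ring A]
    [Algebra R A] {a b : A} (h : A1Relations a b) (hab : Algebra.adjoin R {a, b} = ⊤) :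
    (TwoSidedIdeal.span {a, b}).asIdeal ^ 5 = ⊥ := by
  have := isTwoSided_idealSpan_of_adjoin_eq_top hab
  rw [asIdeal_twoSidedIdealSpan, idealSpan_pow]
  exact Ideal.span_eq_bot.2 h.pair_pow_five_subset

/-- In `A(1)`, the augmentation ideal `I`, the two-sided ideal generated by `Sq1` and `Sq2`,
satisfies `I⁸ = 0`. -/
theorem A1_augmentationIdeal_pow_eight :
    ((TwoSidedIdeal.span {Sq1, Sq2} : TwoSidedIdeal A1).asIdeal) ^ 8 = ⊥ :=
  eq_bot_mono (Ideal.pow_le_pow_right (by norm_num))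
    (A1_augmentationIdeal_pow_eight_general a1Relations_Sq1_Sq2 adjoin_Sq1_Sq2)
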